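/- Along the cycle chart, under the cycle conditions τ_N ≡ 0 and k_B + K̄ ≡ 0, the coefficients of the second fundamental form relative to the mean curvature vector H satisfy, for every u: e_H(u,0) = k(u)·H̃₁(u,0), f_H(u,0) = 0, g_H(u,0) = K(u)·H̃₁(u,0), and ∂f_H/∂v(u,0) = H̃₁(u,0)·(K'(u) − τ_B(u)K̄(u)) − τ(u)·∂H̃₂/∂v(u,0). -/

import Mathlib

/-! The surface is `α = c + v T + v² W` with `W` smooth and `2 W(u,0) = K N + K̄ B`. Hence, on the
curve `v = 0`, `α_u = t`, `α_v = T`, `α_uu = t'`, `α_uv = T'`, `α_vv = K N + K̄ B` and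
`α_uvv = (K N + K̄ B)'` (`pdu_expansion`, `pdv_expansion`, `pdv_pdv_expansion`), while `N₁ = N` and
`N₂ = t ∧ T ∧ N = B` (`wedge_frame`). With `E = G = 1`, `F = 0` this gives `H̃₂(u,0) = (k_B + K̄)/2 = 0`,
so `H = H̃₁ N` on the curve and the formulas for `e_H`, `f_H`, `g_H` follow from the Darboux equations with `τ_N = 0`.

For the last identity, write `f_H = H̃₁ f₁ + H̃₂ f₂`. On the curve `f₁ = ⟨T', N⟩ = 0`,
`f₂ = ⟨T', B⟩ = -τ` and `H̃₂ = 0`, so `(f_H)_v = H̃₁ (f₁)_v - τ (H̃₂)_v`. Finally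
`(f₁)_v = ⟨α_uvv, N⟩ + ⟨T', (B̄₁)_v⟩`, where the first term is `K' - τ_B K̄`. The second vanishes since
`T' = -k_g t - τ B`, `B̄₁` has no `B`-component, and its `t`-component `y₁x₂ - x₃` vanishes to second
order in `v`. The derivative `∂_v` is a Fréchet derivative in `(u,v)`, so joint differentiability of
all the quantities involved at `(u,0)` is needed as well. -/

noncomputable section

open scoped RealInnerProductSpace

abbrev E4 : Type := EuclideanSpace ℝ (Fin 4)

/-- Partial derivative with respect to the first variable `u`. -/
def pdu {X : Type*} [NormedAddCommGroup X] [NormedSpace ℝ X]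
    (f : ℝ × ℝ → X) (p : ℝ × ℝ) : X := fderiv ℝ f p (1, 0)

/-- Partial derivative with respect to the second variable `v`. -/
def pdv {X : Type*} [NormedAddCommGroup X] [NormedSpace ℝ X]
    (f : ℝ × ℝ → X) (p : ℝ × ℝ) : X := fderiv ℝ f p (0, 1)

/-- The wedge `x ∧ y ∧ z` of three vectors of `ℝ⁴`: the unique vector satisfying
`⟪x ∧ y ∧ z, w⟫ = det (x, y, z, w)` for all `w ∈ ℝ⁴`. -/
def wedge (x y z : E4) : E4 :=
  (WithLp.equiv 2 (Fin 4 → ℝ)).symm fun i =>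
    Matrix.det (Matrix.of ![(x : Fin 4 → ℝ), y, z, fun j => if j = i then 1 else 0])

namespace Cycle

/-- Coefficient `E` of the first fundamental form. -/
def Ec (α : ℝ × ℝ → E4) (p : ℝ × ℝ) : ℝ := ⟪pdu α p, pdu α p⟫
/-- Coefficient `F` of the first fundamental form. -/
def Fc (α : ℝ × ℝ → E4) (p : ℝ × ℝ) : ℝ := ⟪pdu α p, pdv α p⟫
/-- Coefficient `G` of the first fundamental form. -/
def Gc (α : ℝ × ℝ → E4) (p : ℝ × ℝ) : ℝ := ⟪pdv α p, pdv α p⟫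

/-- `x₁ = ⟨α_u, t⟩`. -/
def x1 (α : ℝ × ℝ → E4) (t : ℝ → E4) (p : ℝ × ℝ) : ℝ := ⟪pdu α p, t p.1⟫
/-- `x₂ = ⟨α_u, T⟩`. -/
def x2 (α : ℝ × ℝ → E4) (T : ℝ → E4) (p : ℝ × ℝ) : ℝ := ⟪pdu α p, T p.1⟫
/-- `x₃ = ⟨α_u, N⟩`. -/
def x3 (α : ℝ × ℝ → E4) (N : ℝ → E4) (p : ℝ × ℝ) : ℝ := ⟪pdu α p, N p.1⟫
/-- `y₁ = ⟨α_v, N⟩`. -/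
def y1 (α : ℝ × ℝ → E4) (N : ℝ → E4) (p : ℝ × ℝ) : ℝ := ⟪pdv α p, N p.1⟫

/-- `B̄₁ = (y₁x₂ − x₃)t − x₁y₁T + x₁N`. -/
def Bb1 (α : ℝ × ℝ → E4) (t T N : ℝ → E4) (p : ℝ × ℝ) : E4 :=
  (y1 α N p * x2 α T p - x3 α N p) • t p.1 - (x1 α t p * y1 α N p) • T p.1 + x1 α t p • N p.1

/-- `B̄₂ = α_u ∧ α_v ∧ B̄₁`. -/
def Bb2 (α : ℝ × ℝ → E4) (t T N : ℝ → E4) (p : ℝ × ℝ) : E4 :=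
  wedge (pdu α p) (pdv α p) (Bb1 α t T N p)

/-- `N₁ = B̄₁/|B̄₁|`. -/
def N1 (α : ℝ × ℝ → E4) (t T N : ℝ → E4) (p : ℝ × ℝ) : E4 :=
  ‖Bb1 α t T N p‖⁻¹ • Bb1 α t T N p

/-- `N₂ = B̄₂/|B̄₂|`. -/
def N2 (α : ℝ × ℝ → E4) (t T N : ℝ → E4) (p : ℝ × ℝ) : E4 :=
  ‖Bb2 α t T N p‖⁻¹ • Bb2 α t T N p

def e1 (α : ℝ × ℝ → E4) (t T N : ℝ → E4) (p : ℝ × ℝ) : ℝ := ⟪pdu (pdu α) p, N1 α t T N p⟫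
def f1 (α : ℝ × ℝ → E4) (t T N : ℝ → E4) (p : ℝ × ℝ) : ℝ := ⟪pdv (pdu α) p, N1 α t T N p⟫
def g1 (α : ℝ × ℝ → E4) (t T N : ℝ → E4) (p : ℝ × ℝ) : ℝ := ⟪pdv (pdv α) p, N1 α t T N p⟫
def e2 (α : ℝ × ℝ → E4) (t T N : ℝ → E4) (p : ℝ × ℝ) : ℝ := ⟪pdu (pdu α) p, N2 α t T N p⟫
def f2 (α : ℝ × ℝ → E4) (t T N : ℝ → E4) (p : ℝ × ℝ) : ℝ := ⟪pdv (pdu α) p, N2 α t T N p⟫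
def g2 (α : ℝ × ℝ → E4) (t T N : ℝ → E4) (p : ℝ × ℝ) : ℝ := ⟪pdv (pdv α) p, N2 α t T N p⟫

/-- `H̃₁ = (E g₁ − 2F f₁ + G e₁)/(2(EG − F²))`. -/
def Ht1 (α : ℝ × ℝ → E4) (t T N : ℝ → E4) (p : ℝ × ℝ) : ℝ :=
  (Ec α p * g1 α t T N p - 2 * Fc α p * f1 α t T N p + Gc α p * e1 α t T N p) /
    (2 * (Ec α p * Gc α p - Fc α p ^ 2))

/-- `H̃₂ = (E g₂ − 2F f₂ + G e₂)/(2(EG − F²))`. -/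
def Ht2 (α : ℝ × ℝ → E4) (t T N : ℝ → E4) (p : ℝ × ℝ) : ℝ :=
  (Ec α p * g2 α t T N p - 2 * Fc α p * f2 α t T N p + Gc α p * e2 α t T N p) /
    (2 * (Ec α p * Gc α p - Fc α p ^ 2))

/-- The mean curvature vector `H = H̃₁N₁ + H̃₂N₂`. -/
def Hvec (α : ℝ × ℝ → E4) (t T N : ℝ → E4) (p : ℝ × ℝ) : E4 :=
  Ht1 α t T N p • N1 α t T N p + Ht2 α t T N p • N2 α t T N p

def eH (α : ℝ × ℝ → E4) (t T N : ℝ → E4) (p : ℝ × ℝ) : ℝ := ⟪pdu (pdu α) p, Hvec α t T N p⟫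
def fH (α : ℝ × ℝ → E4) (t T N : ℝ → E4) (p : ℝ × ℝ) : ℝ := ⟪pdv (pdu α) p, Hvec α t T N p⟫
def gH (α : ℝ × ℝ → E4) (t T N : ℝ → E4) (p : ℝ × ℝ) : ℝ := ⟪pdv (pdv α) p, Hvec α t T N p⟫

end Cycle

open Cycle

/-! ### Partial derivatives of expansions `x(u) + v y(u) + v² W(u,v)` -/

section Calculus

variable {X : Type*} [NormedAddCommGroup X] [NormedSpace ℝ X]

lemma contDiff_pdu {f : ℝ × ℝ → X} (hf : ContDiff ℝ (⊤ : ℕ∞) f) :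
    ContDiff ℝ (⊤ : ℕ∞) (pdu f) :=
  (hf.fderiv_right (m := (⊤ : ℕ∞)) (by simp)).clm_apply contDiff_const

lemma contDiff_pdv {f : ℝ × ℝ → X} (hf : ContDiff ℝ (⊤ : ℕ∞) f) :
    ContDiff ℝ (⊤ : ℕ∞) (pdv f) :=
  (hf.fderiv_right (m := (⊤ : ℕ∞)) (by simp)).clm_apply contDiff_const

lemma hasDerivAt_pdv {f : ℝ × ℝ → X} {u v : ℝ} (hf : DifferentiableAt ℝ f (u, v)) :
    HasDerivAt (fun s => f (u, s)) (pdv f (u, v)) v :=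
  hf.hasFDerivAt.comp_hasDerivAt v ((hasDerivAt_const v u).prodMk (hasDerivAt_id v))

lemma hasDerivAt_pdu {f : ℝ × ℝ → X} {u v : ℝ} (hf : DifferentiableAt ℝ f (u, v)) :
    HasDerivAt (fun s => f (s, v)) (pdu f (u, v)) u :=
  hf.hasFDerivAt.comp_hasDerivAt u ((hasDerivAt_id u).prodMk (hasDerivAt_const u v))

lemma contDiff_expansion {x y : ℝ → X} {W : ℝ × ℝ → X} (hx : ContDiff ℝ (⊤ : ℕ∞) x)
    (hy : ContDiff ℝ (⊤ : ℕ∞) y) (hW : ContDiff ℝ (⊤ : ℕ∞) W) :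
    ContDiff ℝ (⊤ : ℕ∞) (fun p : ℝ × ℝ => x p.1 + p.2 • y p.1 + p.2 ^ 2 • W p) := by
  fun_prop

lemma pdu_expansion {x y : ℝ → X} {W : ℝ × ℝ → X} (hx : ContDiff ℝ (⊤ : ℕ∞) x)
    (hy : ContDiff ℝ (⊤ : ℕ∞) y) (hW : ContDiff ℝ (⊤ : ℕ∞) W) :
    pdu (fun p : ℝ × ℝ => x p.1 + p.2 • y p.1 + p.2 ^ 2 • W p) =
      fun p => deriv x p.1 + p.2 • deriv y p.1 + p.2 ^ 2 • pdu W p := by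
  funext ⟨u, v⟩
  refine (hasDerivAt_pdu ((contDiff_expansion hx hy hW).differentiable (by simp) (u, v))).unique ?_
  exact (((hx.differentiable (by simp) u).hasDerivAt).add
    (((hy.differentiable (by simp) u).hasDerivAt).const_smul v)).add
    ((hasDerivAt_pdu (hW.differentiable (by simp) (u, v))).const_smul (v ^ 2))

lemma pdv_expansion {x y : ℝ → X} {W : ℝ × ℝ → X} (hx : ContDiff ℝ (⊤ : ℕ∞) x)
    (hy : ContDiff ℝ (⊤ : ℕ∞) y) (hW : ContDiff ℝ (⊤ : ℕ∞) W) :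
    pdv (fun p : ℝ × ℝ => x p.1 + p.2 • y p.1 + p.2 ^ 2 • W p) =
      fun p => y p.1 + p.2 • ((2 : ℝ) • W p + p.2 • pdv W p) := by
  funext ⟨u, v⟩
  refine (hasDerivAt_pdv ((contDiff_expansion hx hy hW).differentiable (by simp) (u, v))).unique ?_
  refine HasDerivAt.congr_deriv ((((hasDerivAt_id v).smul_const (y u)).const_add (x u)).add
    ((hasDerivAt_pow 2 v).smul (hasDerivAt_pdv (hW.differentiable (by simp) (u, v))))) ?_
  norm_num
  module

lemma pdv_pdv_expansion {x y : ℝ → X} {W : ℝ × ℝ → X} (hx : ContDiff ℝ (⊤ : ℕ∞) x)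
    (hy : ContDiff ℝ (⊤ : ℕ∞) y) (hW : ContDiff ℝ (⊤ : ℕ∞) W) (u : ℝ) :
    pdv (pdv (fun p : ℝ × ℝ => x p.1 + p.2 • y p.1 + p.2 ^ 2 • W p)) (u, 0) =
      (2 : ℝ) • W (u, 0) := by
  have hd := hasDerivAt_pdv
    ((contDiff_pdv (contDiff_expansion hx hy hW)).differentiable (by simp) (u, 0))
  rw [pdv_expansion hx hy hW] at hd ⊢
  refine hd.unique ?_
  have hZ : ContDiff ℝ (⊤ : ℕ∞) (fun p : ℝ × ℝ => (2 : ℝ) • W p + p.2 • pdv W p) := by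
    have := contDiff_pdv hW
    fun_prop
  refine HasDerivAt.congr_deriv (((hasDerivAt_id (0 : ℝ)).smul
    (hasDerivAt_pdv (hZ.differentiable (by simp) (u, 0)))).const_add (y u)) ?_
  simp only [id_eq, zero_smul, one_smul, add_zero, zero_add]

end Calculus

/-! ### The wedge product -/

lemma inner_wedge (x y z w : E4) :
    ⟪wedge x y z, w⟫ = Matrix.det (Matrix.of ![(x : Fin 4 → ℝ), y, z, w]) := by
  simp [wedge, PiLp.inner_apply, Matrix.det_succ_row_zero, Fin.sum_univ_succ,
    Fin.succAbove]
  ring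

lemma differentiableAt_wedge {x y z : ℝ × ℝ → E4} {p : ℝ × ℝ} (hx : DifferentiableAt ℝ x p)
    (hy : DifferentiableAt ℝ y p) (hz : DifferentiableAt ℝ z p) :
    DifferentiableAt ℝ (fun q => wedge (x q) (y q) (z q)) p := by
  rw [differentiableAt_euclidean] at *
  intro i
  simp only [wedge, WithLp.equiv_symm_apply, Matrix.det_apply, Units.smul_def, zsmul_eq_mul]
  refine DifferentiableAt.fun_sum fun σ _ => DifferentiableAt.mul (by fun_prop) ?_
  simp only [Fin.prod_univ_four]
  have key : ∀ j l : Fin 4, DifferentiableAt ℝ (fun q => (Matrix.of ![(x q : Fin 4 → ℝ), y q, z q,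
      fun j => if j = i then (1 : ℝ) else 0]) j l) p := by
    intro j l
    fin_cases j
    · exact hx l
    · exact hy l
    · exact hz l
    · exact differentiableAt_const _
  exact (((key _ _).mul (key _ _)).mul (key _ _)).mul (key _ _)

/-- The difference `t ∧ T ∧ N - B` is orthogonal to `t`, `T`, `N` (repeated rows in the determinant)
and to `B` (both products are `1`), so it vanishes because the matrix with rows `t, T, N, B` is
invertible. -/
lemma wedge_frame {t T N B : E4} (h1 : ⟪B, B⟫ = (1 : ℝ)) (h2 : ⟪t, B⟫ = (0 : ℝ))
    (h3 : ⟪T, B⟫ = (0 : ℝ)) (h4 : ⟪N, B⟫ = (0 : ℝ))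
    (hdet : Matrix.det (Matrix.of ![(t : Fin 4 → ℝ), T, N, B]) = 1) :
    wedge t T N = B := by
  have hrow : ∀ (w : E4) (i j : Fin 4), i ≠ j →
      Matrix.of ![(t : Fin 4 → ℝ), T, N, w] i = Matrix.of ![(t : Fin 4 → ℝ), T, N, w] j →
      ⟪wedge t T N, w⟫ = (0 : ℝ) := fun w i j hij h => by
    rw [inner_wedge, Matrix.det_zero_of_row_eq hij h]
  have e1 := hrow t 0 3 (by decide) rfl
  have e2 := hrow T 1 3 (by decide) rfl
  have e3 := hrow N 2 3 (by decide) rfl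
  have e4 : ⟪wedge t T N, B⟫ = (1 : ℝ) := by rw [inner_wedge, hdet]
  have hz : ∀ x : E4, ⟪x, wedge t T N - B⟫ = (0 : ℝ) →
      (x : Fin 4 → ℝ) ⬝ᵥ ((wedge t T N - B : E4) : Fin 4 → ℝ) = 0 := by
    intro x hx
    rw [← hx]
    simp [PiLp.inner_apply, dotProduct, mul_comm]
  have h0 : ((wedge t T N - B : E4) : Fin 4 → ℝ) = 0 := by
    refine Matrix.eq_zero_of_mulVec_eq_zero
      (M := Matrix.of ![(t : Fin 4 → ℝ), T, N, B]) (by rw [hdet]; exact one_ne_zero) ?_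
    funext i
    fin_cases i
    · exact hz t (by rw [inner_sub_right, real_inner_comm, e1, h2, sub_zero])
    · exact hz T (by rw [inner_sub_right, real_inner_comm, e2, h3, sub_zero])
    · exact hz N (by rw [inner_sub_right, real_inner_comm, e3, h4, sub_zero])
    · exact hz B (by rw [inner_sub_right, real_inner_comm, e4, h1, sub_self])
  refine sub_eq_zero.mp ?_
  ext i
  exact congrFun h0 i

/-! ### Second fundamental form along the cycle -/

/-- under the cycle conditions `τ_N ≡ 0` and `k_B + K̄ ≡ 0`, the coefficients
of the second fundamental form relative to `H` satisfy `e_H(u,0) = k·H̃₁(u,0)`, `f_H(u,0) = 0`,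
`g_H(u,0) = K·H̃₁(u,0)` and `(f_H)_v(u,0) = H̃₁(u,0)(K' − τ_BK̄) − τ·(H̃₂)_v(u,0)`. -/
theorem stmt16
    (L : ℝ) (hL : 0 < L)
    (t T N B c : ℝ → E4) (kg k kB τN τ τB K Kb a b : ℝ → ℝ) (A Ab : ℝ × ℝ → ℝ)
    (htsm : ContDiff ℝ (⊤ : ℕ∞) t) (hTsm : ContDiff ℝ (⊤ : ℕ∞) T) (hNsm : ContDiff ℝ (⊤ : ℕ∞) N)
    (hBsm : ContDiff ℝ (⊤ : ℕ∞) B) (hcsm : ContDiff ℝ (⊤ : ℕ∞) c)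
    (hkgsm : ContDiff ℝ (⊤ : ℕ∞) kg) (hksm : ContDiff ℝ (⊤ : ℕ∞) k) (hkBsm : ContDiff ℝ (⊤ : ℕ∞) kB)
    (hτNsm : ContDiff ℝ (⊤ : ℕ∞) τN) (hτsm : ContDiff ℝ (⊤ : ℕ∞) τ) (hτBsm : ContDiff ℝ (⊤ : ℕ∞) τB)
    (hKsm : ContDiff ℝ (⊤ : ℕ∞) K) (hKbsm : ContDiff ℝ (⊤ : ℕ∞) Kb) (hasm : ContDiff ℝ (⊤ : ℕ∞) a)
    (hbsm : ContDiff ℝ (⊤ : ℕ∞) b) (hAsm : ContDiff ℝ (⊤ : ℕ∞) A) (hAbsm : ContDiff ℝ (⊤ : ℕ∞) Ab)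
    (htper : Function.Periodic t L) (hTper : Function.Periodic T L)
    (hNper : Function.Periodic N L) (hBper : Function.Periodic B L)
    (hcper : Function.Periodic c L)
    (hkgper : Function.Periodic kg L) (hkper : Function.Periodic k L)
    (hkBper : Function.Periodic kB L) (hτNper : Function.Periodic τN L)
    (hτper : Function.Periodic τ L) (hτBper : Function.Periodic τB L)
    (hKper : Function.Periodic K L) (hKbper : Function.Periodic Kb L)
    (haper : Function.Periodic a L) (hbper : Function.Periodic b L)
    (hAper : ∀ u v : ℝ, A (u + L, v) = A (u, v)) (hAbper : ∀ u v : ℝ, Ab (u + L, v) = Ab (u, v))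
    (hortho : ∀ u : ℝ, ⟪t u, t u⟫ = 1 ∧ ⟪T u, T u⟫ = 1 ∧ ⟪N u, N u⟫ = 1 ∧
      ⟪B u, B u⟫ = 1 ∧ ⟪t u, T u⟫ = 0 ∧ ⟪t u, N u⟫ = 0 ∧ ⟪t u, B u⟫ = 0 ∧
      ⟪T u, N u⟫ = 0 ∧ ⟪T u, B u⟫ = 0 ∧ ⟪N u, B u⟫ = 0)
    (hdet : ∀ u : ℝ, Matrix.det (Matrix.of ![(t u : Fin 4 → ℝ), T u, N u, B u]) = 1)
    (hDt : ∀ u : ℝ, deriv t u = kg u • T u + k u • N u + kB u • B u)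
    (hDT : ∀ u : ℝ, deriv T u = -(kg u) • t u - τN u • N u - τ u • B u)
    (hDN : ∀ u : ℝ, deriv N u = -(k u) • t u + τN u • T u + τB u • B u)
    (hDB : ∀ u : ℝ, deriv B u = -(kB u) • t u + τ u • T u - τB u • N u)
    (hct : ∀ u : ℝ, deriv c u = t u)
    (hA0 : ∀ u : ℝ, A (u, 0) = 0) (hAb0 : ∀ u : ℝ, Ab (u, 0) = 0)
    (α : ℝ × ℝ → E4)
    (hα : ∀ u v : ℝ, α (u, v) = c u + v • T u +
      (K u * v ^ 2 / 2 + a u * v ^ 3 / 6 + v ^ 3 * A (u, v)) • N u +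
      (Kb u * v ^ 2 / 2 + b u * v ^ 3 / 6 + v ^ 3 * Ab (u, v)) • B u)
    (hτN0 : ∀ u : ℝ, τN u = 0) (hcycle : ∀ u : ℝ, kB u + Kb u = 0) :
    ∀ u : ℝ,
      eH α t T N (u, 0) = k u * Ht1 α t T N (u, 0) ∧
      fH α t T N (u, 0) = 0 ∧
      gH α t T N (u, 0) = K u * Ht1 α t T N (u, 0) ∧
      pdv (fH α t T N) (u, 0) =
        Ht1 α t T N (u, 0) * (deriv K u - τB u * Kb u) - τ u * pdv (Ht2 α t T N) (u, 0) := by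
  intro u
  obtain ⟨htt, hTT, hNN, hBB, htT, htN, htB, hTN, hTB, hNB⟩ := hortho u
  have hTt := (real_inner_comm (T u) (t u)).symm.trans htT
  have hNt := (real_inner_comm (N u) (t u)).symm.trans htN
  have hBt := (real_inner_comm (B u) (t u)).symm.trans htB
  have hNT := (real_inner_comm (N u) (T u)).symm.trans hTN
  have hBT := (real_inner_comm (B u) (T u)).symm.trans hTB
  have hBN := (real_inner_comm (B u) (N u)).symm.trans hNB
  -- The second-order remainder: `α = c + v T + v² W`.
  obtain ⟨W, hW⟩ : ∃ W : ℝ × ℝ → E4, W = fun p =>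
      (K p.1 / 2 + a p.1 * p.2 / 6 + p.2 * A p) • N p.1 +
      (Kb p.1 / 2 + b p.1 * p.2 / 6 + p.2 * Ab p) • B p.1 := ⟨_, rfl⟩
  have hWsm : ContDiff ℝ (⊤ : ℕ∞) W := by rw [hW]; fun_prop
  have hαW : α = fun p => c p.1 + p.2 • T p.1 + p.2 ^ 2 • W p := by
    funext ⟨u, v⟩
    rw [hα, hW]
    module
  have hαsm : ContDiff ℝ (⊤ : ℕ∞) α := hαW ▸ contDiff_expansion hcsm hTsm hWsm
  have hc' : deriv c = t := funext hct
  have hT'sm : ContDiff ℝ (⊤ : ℕ∞) (deriv T) := contDiff_infty_iff_deriv.mp hTsm |>.2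
  have hWusm := contDiff_pdu hWsm
  have hpu : pdu α = fun p => t p.1 + p.2 • deriv T p.1 + p.2 ^ 2 • pdu W p := by
    rw [hαW, pdu_expansion hcsm hTsm hWsm, hc']
  have hu : pdu α (u, 0) = t u := by simp [hpu]
  have hv : pdv α (u, 0) = T u := by simp [hαW, pdv_expansion hcsm hTsm hWsm]
  have huu : pdu (pdu α) (u, 0) = deriv t u := by
    simp [hpu, pdu_expansion htsm hT'sm hWusm]
  have huv : pdv (pdu α) (u, 0) = deriv T u := by
    simp [hpu, pdv_expansion htsm hT'sm hWusm]
  have hvv : pdv (pdv α) (u, 0) = K u • N u + Kb u • B u := by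
    rw [hαW, pdv_pdv_expansion hcsm hTsm hWsm, hW]
    simp only [mul_zero, zero_mul, zero_div, add_zero]
    module
  have huvv : pdv (pdv (pdu α)) (u, 0) = deriv K u • N u + K u • deriv N u
      + (deriv Kb u • B u + Kb u • deriv B u) := by
    rw [hpu, pdv_pdv_expansion htsm hT'sm hWusm]
    have h2W : HasDerivAt (fun s => (2 : ℝ) • W (s, 0)) ((2 : ℝ) • pdu W (u, 0)) u :=
      (hasDerivAt_pdu (hWsm.differentiable (by simp) (u, 0))).fun_const_smul 2
    refine h2W.unique ?_
    have he : (fun s => (2 : ℝ) • W (s, 0)) = fun s => K s • N s + Kb s • B s := by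
      funext s
      simp only [hW, mul_zero, zero_mul, zero_div, add_zero]
      module
    rw [he, add_comm (deriv K u • N u), add_comm (deriv Kb u • B u)]
    exact ((hKsm.differentiable (by simp) u).hasDerivAt.smul
      (hNsm.differentiable (by simp) u).hasDerivAt).add
      ((hKbsm.differentiable (by simp) u).hasDerivAt.smul
      (hBsm.differentiable (by simp) u).hasDerivAt)
  have du := (contDiff_pdu hαsm).differentiable (by simp) (u, 0)
  have dv := (contDiff_pdv hαsm).differentiable (by simp) (u, 0)
  have duu := (contDiff_pdu (contDiff_pdu hαsm)).differentiable (by simp) (u, 0)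
  have duv := (contDiff_pdv (contDiff_pdu hαsm)).differentiable (by simp) (u, 0)
  have dvv := (contDiff_pdv (contDiff_pdv hαsm)).differentiable (by simp) (u, 0)
  have dt : DifferentiableAt ℝ (fun p : ℝ × ℝ => t p.1) (u, 0) :=
    (htsm.comp contDiff_fst).differentiable (by simp) _
  have dT : DifferentiableAt ℝ (fun p : ℝ × ℝ => T p.1) (u, 0) :=
    (hTsm.comp contDiff_fst).differentiable (by simp) _
  have dN : DifferentiableAt ℝ (fun p : ℝ × ℝ => N p.1) (u, 0) :=
    (hNsm.comp contDiff_fst).differentiable (by simp) _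
  have dx1 : DifferentiableAt ℝ (x1 α t) (u, 0) := du.inner ℝ dt
  have dx2 : DifferentiableAt ℝ (x2 α T) (u, 0) := du.inner ℝ dT
  have dx3 : DifferentiableAt ℝ (x3 α N) (u, 0) := du.inner ℝ dN
  have dy1 : DifferentiableAt ℝ (y1 α N) (u, 0) := dv.inner ℝ dN
  have vx1 : x1 α t (u, 0) = 1 := by simp only [x1, hu, htt]
  have vx2 : x2 α T (u, 0) = 0 := by simp only [x2, hu, htT]
  have vx3 : x3 α N (u, 0) = 0 := by simp only [x3, hu, htN]
  have vy1 : y1 α N (u, 0) = 0 := by simp only [y1, hv, hTN]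
  have dB1 : DifferentiableAt ℝ (Bb1 α t T N) (u, 0) :=
    ((((dy1.mul dx2).sub dx3).smul dt).sub ((dx1.mul dy1).smul dT)).add (dx1.smul dN)
  have vB1 : Bb1 α t T N (u, 0) = N u := by simp [Bb1, vx1, vx2, vx3, vy1]
  have dB2 : DifferentiableAt ℝ (Bb2 α t T N) (u, 0) := differentiableAt_wedge du dv dB1
  have vB2 : Bb2 α t T N (u, 0) = B u := by
    rw [Bb2, hu, hv, vB1, wedge_frame hBB htB hTB hNB (hdet u)]
  have nt : ‖t u‖ = 1 := by rw [norm_eq_sqrt_real_inner, htt, Real.sqrt_one]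
  have nN : ‖N u‖ = 1 := by rw [norm_eq_sqrt_real_inner, hNN, Real.sqrt_one]
  have nB : ‖B u‖ = 1 := by rw [norm_eq_sqrt_real_inner, hBB, Real.sqrt_one]
  have dn1 : DifferentiableAt ℝ (fun p => ‖Bb1 α t T N p‖⁻¹) (u, 0) :=
    (dB1.norm ℝ (by rw [← norm_ne_zero_iff, vB1, nN]; exact one_ne_zero)).inv
      (by rw [vB1, nN]; exact one_ne_zero)
  have dn2 : DifferentiableAt ℝ (fun p => ‖Bb2 α t T N p‖⁻¹) (u, 0) :=
    (dB2.norm ℝ (by rw [← norm_ne_zero_iff, vB2, nB]; exact one_ne_zero)).inv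
      (by rw [vB2, nB]; exact one_ne_zero)
  have dN1 : DifferentiableAt ℝ (N1 α t T N) (u, 0) := dn1.smul dB1
  have dN2 : DifferentiableAt ℝ (N2 α t T N) (u, 0) := dn2.smul dB2
  have vN1 : N1 α t T N (u, 0) = N u := by simp [N1, vB1, nN]
  have vN2 : N2 α t T N (u, 0) = B u := by simp [N2, vB2, nB]
  have vE : Ec α (u, 0) = 1 := by simp only [Ec, hu, htt]
  have vF : Fc α (u, 0) = 0 := by simp only [Fc, hu, hv, htT]
  have vG : Gc α (u, 0) = 1 := by simp only [Gc, hv, hTT]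
  have dE : DifferentiableAt ℝ (Ec α) (u, 0) := du.inner ℝ du
  have dF : DifferentiableAt ℝ (Fc α) (u, 0) := du.inner ℝ dv
  have dG : DifferentiableAt ℝ (Gc α) (u, 0) := dv.inner ℝ dv
  have de1 : DifferentiableAt ℝ (e1 α t T N) (u, 0) := duu.inner ℝ dN1
  have df1 : DifferentiableAt ℝ (f1 α t T N) (u, 0) := duv.inner ℝ dN1
  have dg1 : DifferentiableAt ℝ (g1 α t T N) (u, 0) := dvv.inner ℝ dN1
  have de2 : DifferentiableAt ℝ (e2 α t T N) (u, 0) := duu.inner ℝ dN2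
  have df2 : DifferentiableAt ℝ (f2 α t T N) (u, 0) := duv.inner ℝ dN2
  have dg2 : DifferentiableAt ℝ (g2 α t T N) (u, 0) := dvv.inner ℝ dN2
  have hden : 2 * (Ec α (u, 0) * Gc α (u, 0) - Fc α (u, 0) ^ 2) ≠ 0 := by
    rw [vE, vF, vG]; norm_num
  have dden : DifferentiableAt ℝ (fun p => 2 * (Ec α p * Gc α p - Fc α p ^ 2)) (u, 0) :=
    ((dE.mul dG).sub (dF.pow 2)).const_mul 2
  have dH1 : DifferentiableAt ℝ (Ht1 α t T N) (u, 0) :=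
    (((dE.mul dg1).sub ((dF.const_mul 2).mul df1)).add (dG.mul de1)).mul (dden.inv hden)
  have dH2 : DifferentiableAt ℝ (Ht2 α t T N) (u, 0) :=
    (((dE.mul dg2).sub ((dF.const_mul 2).mul df2)).add (dG.mul de2)).mul (dden.inv hden)
  have ve2 : e2 α t T N (u, 0) = kB u := by
    simp [e2, huu, vN2, hDt, inner_add_left, real_inner_smul_left, hTB, hNB, nB]
  have vg2 : g2 α t T N (u, 0) = Kb u := by
    simp [g2, hvv, vN2, inner_add_left, real_inner_smul_left, hNB, nB]
  have hT' : deriv T u = -(kg u) • t u - τ u • B u := by rw [hDT, hτN0]; simp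
  have vf1 : f1 α t T N (u, 0) = 0 := by
    simp [f1, huv, vN1, hT', inner_sub_left, real_inner_smul_left, htN, hBN]
  have vf2 : f2 α t T N (u, 0) = -τ u := by
    simp [f2, huv, vN2, hT', inner_sub_left, real_inner_smul_left, htB, nB]
  have vH2 : Ht2 α t T N (u, 0) = 0 := by
    rw [Ht2, vE, vF, vG, ve2, vg2]
    linear_combination (hcycle u) / 2
  have vH : Hvec α t T N (u, 0) = Ht1 α t T N (u, 0) • N u := by
    rw [Hvec, vH2, vN1, zero_smul, add_zero]
  refine ⟨?_, ?_, ?_, ?_⟩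
  · simp [eH, huu, vH, hDt, inner_add_left, real_inner_smul_left, real_inner_smul_right, hTN, nN,
      hBN, mul_comm]
  · simp [fH, huv, vH, hT', inner_sub_left, real_inner_smul_left, real_inner_smul_right, htN, hBN]
  · simp [gH, hvv, vH, inner_add_left, real_inner_smul_left, real_inner_smul_right, nN, hBN,
      mul_comm]
  -- `(x₃)_v = ⟨α_uv, N⟩ = 0` on the curve.
  have lx3 : HasDerivAt (fun s => x3 α N (u, s)) 0 0 := by
    have h := (hasDerivAt_pdv du).inner ℝ (hasDerivAt_const (0 : ℝ) (N u))
    simp only [huv] at h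
    refine h.congr_deriv ?_
    simp [hT', inner_sub_left, real_inner_smul_left, htN, hBN]
  -- Only the `t`-component of `B̄₁` survives in `⟨T', B̄₁⟩`, and it vanishes to second order.
  have hTB1 : ⟪deriv T u, pdv (Bb1 α t T N) (u, 0)⟫ = (0 : ℝ) := by
    have h1 := (hasDerivAt_const (0 : ℝ) (deriv T u)).inner ℝ (hasDerivAt_pdv dB1)
    rw [inner_zero_left, add_zero] at h1
    refine h1.unique ?_
    have h2 := (((hasDerivAt_pdv dy1).mul (hasDerivAt_pdv dx2)).sub lx3).const_mul (-(kg u))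
    rw [vx2, vy1] at h2
    refine (h2.congr_of_eventuallyEq (.of_forall fun s => ?_)).congr_deriv ?_
    · simp [Bb1, hT', inner_sub_left, inner_add_right, inner_sub_right, real_inner_smul_left,
        real_inner_smul_right, nt, htT, htN, hBt, hBT, hBN]
      ring
    · simp
  have lf1 : HasDerivAt (fun s => f1 α t T N (u, s)) (deriv K u - τB u * Kb u) 0 := by
    have h0 : (⟪pdv (pdu α) (u, 0), Bb1 α t T N (u, 0)⟫ : ℝ) = 0 := by
      rw [vB1, ← vN1]; exact vf1
    have h := (hasDerivAt_pdv dn1).mul ((hasDerivAt_pdv duv).inner ℝ (hasDerivAt_pdv dB1))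
    rw [h0, mul_zero, zero_add, huv, hTB1, zero_add, vB1, nN, inv_one, one_mul, huvv] at h
    refine (h.congr_of_eventuallyEq (.of_forall fun s => ?_)).congr_deriv ?_
    · simp [f1, N1, real_inner_smul_right]
    · simp [hDN, hDB, hτN0, inner_add_left, inner_sub_left, real_inner_smul_left, htN, nN, hTN, hBN]
      ring
  have hfH : fH α t T N = fun p =>
      Ht1 α t T N p * f1 α t T N p + Ht2 α t T N p * f2 α t T N p := by
    funext p
    simp [fH, Hvec, f1, f2, inner_add_right, real_inner_smul_right]
  have dfH : DifferentiableAt ℝ (fH α t T N) (u, 0) := by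
    rw [hfH]; exact (dH1.mul df1).add (dH2.mul df2)
  refine (hasDerivAt_pdv dfH).unique ?_
  have h := ((hasDerivAt_pdv dH1).mul lf1).add ((hasDerivAt_pdv dH2).mul (hasDerivAt_pdv df2))
  rw [vf1, vf2, vH2] at h
  rw [hfH]
  refine h.congr_deriv ?_
  ring
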